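/- Assume 1 − (d−1)ν − (2K−1)dμ_B > 0. Let S ⊆ I1 with |S| = k (0 ≤ k < K), let P_S denote the orthogonal projection onto the column span of the blocks {A_l : l ∈ S}, and set v = Σ_{l∈I1∖S} A_l x̃_l. Then max_{l∈I1} ‖A_l^T (I − P_S) v‖_2 ≥ (1 − (d−1)ν − (2K−2k−1)dμ_B) · min_{l∈I1} ‖x̃_l‖_2, and this lower bound is positive whenever min_{l∈I1} ‖x̃_l‖_2 > 0. -/

import Mathlib

/- Setting: a measurement matrix `A ∈ ℝ^{m×n}` with `n = L·d`, partitioned into `L` column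
blocks of size `m×d`; columns are indexed by pairs `(l, j)` (block `l`, position `j`). -/

noncomputable section

open Finset Matrix

/-- Euclidean (ℓ₂) norm of a finitely indexed real vector. -/
def e2norm {ι : Type*} [Fintype ι] (v : ι → ℝ) : ℝ := Real.sqrt (∑ i, v i ^ 2)

/-- Euclidean inner (dot) product of two real vectors. -/
def dotp {ι : Type*} [Fintype ι] (u v : ι → ℝ) : ℝ := ∑ i, u i * v i

/-- The `(l, j)` column of the block matrix `A` (block `l`, position `j` inside the block). -/
def acol {m L d : ℕ} (A : Matrix (Fin m) (Fin L × Fin d) ℝ) (l : Fin L) (j : Fin d) :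
    Fin m → ℝ :=
  fun i => A i (l, j)

/-- `A_lᵀ v` : correlation of the `l`-th block of `A` with a vector `v ∈ ℝ^m`. -/
def blkT {m L d : ℕ} (A : Matrix (Fin m) (Fin L × Fin d) ℝ) (l : Fin L) (v : Fin m → ℝ) :
    Fin d → ℝ :=
  fun j => dotp (acol A l j) v

/-- Spectral norm (largest singular value) `ρ(X)` of a real matrix, as the supremum of
`‖Xu‖₂ / ‖u‖₂` over nonzero `u`. -/
def specNorm {p q : ℕ} (X : Matrix (Fin p) (Fin q) ℝ) : ℝ :=
  ⨆ u : {u : Fin q → ℝ // u ≠ 0}, e2norm (X *ᵥ u.1) / e2norm u.1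

/-- The `d × d` cross-Gram matrix `A_iᵀ A_j` of two blocks of `A`. -/
def bgram {m L d : ℕ} (A : Matrix (Fin m) (Fin L × Fin d) ℝ) (i j : Fin L) :
    Matrix (Fin d) (Fin d) ℝ :=
  fun a b => dotp (acol A i a) (acol A j b)

/-- Block-coherence `μ_B = max_{i ≠ j} (1/d) ρ(A_iᵀ A_j)`. -/
def blockCoh {m L d : ℕ} (A : Matrix (Fin m) (Fin L × Fin d) ℝ) : ℝ :=
  ⨆ p : {p : Fin L × Fin L // p.1 ≠ p.2},
    (1 / (d : ℝ)) * specNorm (bgram A p.1.1 p.1.2)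

/-- Sub-coherence `ν`: the maximum of `|a_iᵀ a_j|` over pairs of distinct columns lying in the
same block of `A`. -/
def subCoh {m L d : ℕ} (A : Matrix (Fin m) (Fin L × Fin d) ℝ) : ℝ :=
  ⨆ t : {t : Fin L × Fin d × Fin d // t.2.1 ≠ t.2.2},
    |dotp (acol A t.1.1 t.1.2.1) (acol A t.1.1 t.1.2.2)|

theorem e2norm_eq_norm {ι : Type*} [Fintype ι] (v : ι → ℝ) : e2norm v = ‖WithLp.toLp 2 v‖ := by
  rw [EuclideanSpace.norm_eq]; simp [e2norm]

theorem e2norm_nonneg' {ι : Type*} [Fintype ι] (v : ι → ℝ) : 0 ≤ e2norm v := Real.sqrt_nonneg _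

theorem e2norm_sq' {ι : Type*} [Fintype ι] (v : ι → ℝ) : e2norm v ^ 2 = ∑ i, v i ^ 2 :=
  Real.sq_sqrt (Finset.sum_nonneg fun i _ => sq_nonneg _)

theorem e2norm_pos' {ι : Type*} [Fintype ι] (v : ι → ℝ) (h : v ≠ 0) : 0 < e2norm v := by
  rw [e2norm_eq_norm, norm_pos_iff]
  simpa using h

theorem e2norm_zero' {ι : Type*} [Fintype ι] : e2norm (0 : ι → ℝ) = 0 := by simp [e2norm]

theorem e2norm_neg' {ι : Type*} [Fintype ι] (v : ι → ℝ) : e2norm (-v) = e2norm v := by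
  simp [e2norm]

theorem e2norm_add_le' {ι : Type*} [Fintype ι] (u v : ι → ℝ) :
    e2norm (u + v) ≤ e2norm u + e2norm v := by
  simp only [e2norm_eq_norm, WithLp.toLp_add]; exact norm_add_le _ _

theorem e2norm_sum_le' {ι κ : Type*} [Fintype ι] (s : Finset κ) (f : κ → ι → ℝ) :
    e2norm (∑ k ∈ s, f k) ≤ ∑ k ∈ s, e2norm (f k) := by
  classical
  induction s using Finset.induction_on with
  | empty => simp [e2norm_zero']
  | insert a s ha ih =>
    rw [Finset.sum_insert ha, Finset.sum_insert ha]
    exact (e2norm_add_le' _ _).trans (by linarith)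

theorem dotp_le' {ι : Type*} [Fintype ι] (u v : ι → ℝ) : dotp u v ≤ e2norm u * e2norm v :=
  Real.sum_mul_le_sqrt_mul_sqrt _ _ _

theorem spec_bdd {p q : ℕ} (X : Matrix (Fin p) (Fin q) ℝ) :
    BddAbove (Set.range fun u : {u : Fin q → ℝ // u ≠ 0} => e2norm (X *ᵥ u.1) / e2norm u.1) := by
  refine ⟨Real.sqrt (∑ i, ∑ j, X i j ^ 2), ?_⟩
  rintro _ ⟨⟨u, hu⟩, rfl⟩
  have hp := e2norm_pos' u hu
  simp only
  rw [div_le_iff₀ hp]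
  unfold e2norm
  have hX : 0 ≤ ∑ i, ∑ j, X i j ^ 2 :=
    Finset.sum_nonneg fun i _ => Finset.sum_nonneg fun j _ => sq_nonneg _
  rw [← Real.sqrt_mul hX]
  apply Real.sqrt_le_sqrt
  rw [Finset.sum_mul]
  refine Finset.sum_le_sum fun i _ => ?_
  exact Finset.sum_mul_sq_le_sq_mul_sq Finset.univ (fun j => X i j) u

theorem spec_le {p q : ℕ} (X : Matrix (Fin p) (Fin q) ℝ) (u : Fin q → ℝ) :
    e2norm (X *ᵥ u) ≤ specNorm X * e2norm u := by
  by_cases hu : u = 0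
  · subst hu; simp [e2norm_zero']
  · rw [← div_le_iff₀ (e2norm_pos' u hu)]
    exact le_ciSup (spec_bdd X) ⟨u, hu⟩

theorem spec_nonneg {p q : ℕ} (X : Matrix (Fin p) (Fin q) ℝ) : 0 ≤ specNorm X :=
  Real.iSup_nonneg fun _ => div_nonneg (e2norm_nonneg' _) (e2norm_nonneg' _)

theorem blockCoh_nonneg {m L d : ℕ} (A : Matrix (Fin m) (Fin L × Fin d) ℝ) : 0 ≤ blockCoh A :=
  Real.iSup_nonneg fun _ => mul_nonneg (by positivity) (spec_nonneg _)

theorem subCoh_nonneg {m L d : ℕ} (A : Matrix (Fin m) (Fin L × Fin d) ℝ) : 0 ≤ subCoh A :=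
  Real.iSup_nonneg fun _ => abs_nonneg _

theorem off_le {m L d : ℕ} (hd : 0 < d) (A : Matrix (Fin m) (Fin L × Fin d) ℝ) {i j : Fin L}
    (hij : i ≠ j) (u : Fin d → ℝ) :
    e2norm (bgram A i j *ᵥ u) ≤ (d * blockCoh A) * e2norm u := by
  refine (spec_le _ u).trans (mul_le_mul_of_nonneg_right ?_ (e2norm_nonneg' _))
  have h : (1 / (d : ℝ)) * specNorm (bgram A i j) ≤ blockCoh A :=
    le_ciSup (f := fun p : {p : Fin L × Fin L // p.1 ≠ p.2} =>
      (1 / (d : ℝ)) * specNorm (bgram A p.1.1 p.1.2)) (Set.finite_range _).bddAbove ⟨(i, j), hij⟩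
  have hd' : (0 : ℝ) < d := by exact_mod_cast hd
  rw [one_div, inv_mul_le_iff₀ hd'] at h
  exact h

theorem sub_le {m L d : ℕ} (A : Matrix (Fin m) (Fin L × Fin d) ℝ) (l : Fin L) {i j : Fin d}
    (hij : i ≠ j) : |bgram A l l i j| ≤ subCoh A :=
  le_ciSup (f := fun t : {t : Fin L × Fin d × Fin d // t.2.1 ≠ t.2.2} =>
    |dotp (acol A t.1.1 t.1.2.1) (acol A t.1.1 t.1.2.2)|) (Set.finite_range _).bddAbove
    ⟨(l, i, j), hij⟩

theorem diag_ge {m L d : ℕ} (A : Matrix (Fin m) (Fin L × Fin d) ℝ)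
    (hA : ∀ l j, e2norm (acol A l j) = 1) (l : Fin L) (u : Fin d → ℝ) :
    (1 - ((d : ℝ) - 1) * subCoh A) * e2norm u ≤ e2norm (bgram A l l *ᵥ u) := by
  by_cases hu : u = 0
  · subst hu; simp [e2norm_zero']
  have hp := e2norm_pos' u hu
  have hν := subCoh_nonneg A
  have h1 := dotp_le' u (bgram A l l *ᵥ u)
  have hone : ∀ i, bgram A l l i i = 1 := by
    intro i
    have := e2norm_sq' (acol A l i)
    rw [hA] at this
    simp only [bgram, dotp]
    simp only [sq] at this
    linarith
  have h2 : (1 + subCoh A) * (∑ i, u i ^ 2) - subCoh A * (∑ i, |u i|) ^ 2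
      ≤ dotp u (bgram A l l *ᵥ u) := by
    have e1 : (∑ i, |u i|) ^ 2 = ∑ i, ∑ j, |u i| * |u j| := by
      rw [sq, Finset.sum_mul_sum]
    have e2 : (∑ i, u i ^ 2) = ∑ i, ∑ j, if i = j then u i * u j else 0 := by
      simp [sq]
    have e3 : dotp u (bgram A l l *ᵥ u) = ∑ i, ∑ j, u i * (bgram A l l i j * u j) := by
      simp [dotp, Matrix.mulVec, dotProduct, Finset.mul_sum]
    rw [e1, e2, e3]
    simp only [Finset.mul_sum, ← Finset.sum_sub_distrib]
    refine Finset.sum_le_sum fun i _ => Finset.sum_le_sum fun j _ => ?_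
    by_cases hij : i = j
    · subst hij
      simp only [if_true, hone, abs_mul_abs_self]
      linarith
    · simp only [hij, if_false]
      have h := sub_le A l hij
      have h3 : |u i * (bgram A l l i j * u j)| ≤ subCoh A * (|u i| * |u j|) := by
        rw [abs_mul, abs_mul]
        have : 0 ≤ |u i| * |u j| := by positivity
        nlinarith
      have := neg_abs_le (u i * (bgram A l l i j * u j))
      linarith
  have h3 : (∑ i, |u i|) ^ 2 ≤ d * ∑ i, u i ^ 2 := by
    have := sq_sum_le_card_mul_sum_sq (s := Finset.univ) (f := fun i => |u i|)
    simpa using this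
  have h4 := e2norm_sq' u
  rw [← h4] at h2 h3
  have h5 := mul_le_mul_of_nonneg_left h3 hν
  refine le_of_mul_le_mul_left ?_ hp
  nlinarith

theorem blkT_expand {m L d : ℕ} (A : Matrix (Fin m) (Fin L × Fin d) ℝ) (l : Fin L)
    (I : Finset (Fin L)) (y : Fin L → Fin d → ℝ) :
    blkT A l (fun i => ∑ l' ∈ I, ∑ j, A i (l', j) * y l' j) = ∑ l' ∈ I, bgram A l l' *ᵥ y l' := by
  ext a
  simp only [blkT, dotp, Finset.sum_apply, Matrix.mulVec, dotProduct, bgram, acol,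
    Finset.mul_sum, Finset.sum_mul]
  rw [Finset.sum_comm]
  refine Finset.sum_congr rfl fun l' _ => ?_
  rw [Finset.sum_comm]
  refine Finset.sum_congr rfl fun j _ => Finset.sum_congr rfl fun i _ => by ring

theorem key_ineq {m L d : ℕ} (hd : 0 < d) (A : Matrix (Fin m) (Fin L × Fin d) ℝ)
    (hA : ∀ l j, e2norm (acol A l j) = 1) (I : Finset (Fin L)) (y : Fin L → Fin d → ℝ)
    (l : Fin L) (hl : l ∈ I) :
    (1 - ((d : ℝ) - 1) * subCoh A + d * blockCoh A) * e2norm (y l) ≤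
      e2norm (blkT A l (fun i => ∑ l' ∈ I, ∑ j, A i (l', j) * y l' j))
        + d * blockCoh A * ∑ l' ∈ I, e2norm (y l') := by
  rw [blkT_expand]
  have h1 := diag_ge A hA l (y l)
  have h2 : bgram A l l *ᵥ y l = (∑ l' ∈ I, bgram A l l' *ᵥ y l')
      + -(∑ l' ∈ I.erase l, bgram A l l' *ᵥ y l') := by
    rw [← Finset.add_sum_erase _ _ hl]; abel
  have h3 := e2norm_add_le' (∑ l' ∈ I, bgram A l l' *ᵥ y l')
    (-(∑ l' ∈ I.erase l, bgram A l l' *ᵥ y l'))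
  rw [← h2, e2norm_neg'] at h3
  have h4 : e2norm (∑ l' ∈ I.erase l, bgram A l l' *ᵥ y l') ≤
      d * blockCoh A * ∑ l' ∈ I.erase l, e2norm (y l') := by
    refine (e2norm_sum_le' _ _).trans ?_
    rw [Finset.mul_sum]
    refine Finset.sum_le_sum fun l' hl' => off_le hd A ?_ _
    exact (Finset.ne_of_mem_erase hl').symm
  rw [← Finset.add_sum_erase _ (fun l' => e2norm (y l')) hl]
  nlinarith

/-- **Eq. (31) of the paper.**  Assume `1 - (d-1)ν - (2K-1)dμ_B > 0`.  For `S ⊆ I1` with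
`|S| = k < K`, `v = Σ_{l ∈ I1∖S} A_l x̃_l` and `P_S v` the orthogonal projection of `v` onto
the span of the blocks `A_l, l ∈ S`,
`max_{l ∈ I1} ‖A_lᵀ (I - P_S) v‖₂ ≥ (1 - (d-1)ν - (2K-2k-1)dμ_B) · min_{l ∈ I1} ‖x̃_l‖₂`,
and this lower bound is positive whenever `min_{l ∈ I1} ‖x̃_l‖₂ > 0`. -/
theorem stmt8 {m L d K k : ℕ}
    (hm : m < L * d) (hd : 0 < d)
    (A : Matrix (Fin m) (Fin L × Fin d) ℝ)
    (hA : ∀ l j, e2norm (acol A l j) = 1)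
    (μB ν : ℝ) (hμB : μB = blockCoh A) (hν : ν = subCoh A)
    (hcond : 0 < 1 - ((d : ℝ) - 1) * ν - (2 * (K : ℝ) - 1) * d * μB)
    (I1 : Finset (Fin L)) (hcard : I1.card = K) (hKL : K < L)
    (S : Finset (Fin L)) (hS : S ⊆ I1) (hSk : S.card = k) (hk : k < K)
    (xt : Fin L → Fin d → ℝ)
    (v : Fin m → ℝ) (hv : v = fun i => ∑ l ∈ I1 \ S, ∑ j, A i (l, j) * xt l j)
    (PSv : Fin m → ℝ)
    (hPSv1 : ∃ c : Fin L → Fin d → ℝ, ∀ i, PSv i = ∑ l ∈ S, ∑ j, A i (l, j) * c l j)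
    (hPSv2 : ∀ l ∈ S, ∀ j, dotp (acol A l j) (fun i => v i - PSv i) = 0) :
    (1 - ((d : ℝ) - 1) * ν - (2 * (K : ℝ) - 2 * (k : ℝ) - 1) * d * μB) *
        (⨅ l : {l : Fin L // l ∈ I1}, e2norm (xt l.1)) ≤
      (⨆ l : {l : Fin L // l ∈ I1}, e2norm (blkT A l.1 (fun i => v i - PSv i))) ∧
    (0 < ⨅ l : {l : Fin L // l ∈ I1}, e2norm (xt l.1) →
      0 < (1 - ((d : ℝ) - 1) * ν - (2 * (K : ℝ) - 2 * (k : ℝ) - 1) * d * μB) *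
        (⨅ l : {l : Fin L // l ∈ I1}, e2norm (xt l.1))) := by
  classical
  have hb : 0 ≤ (d : ℝ) * μB := by
    rw [hμB]; exact mul_nonneg (Nat.cast_nonneg _) (blockCoh_nonneg A)
  have hkR : (k : ℝ) + 1 ≤ K := by exact_mod_cast hk
  have hk0 : (0 : ℝ) ≤ k := Nat.cast_nonneg _
  have hpos : 0 < 1 - ((d : ℝ) - 1) * ν - (2 * (K : ℝ) - 2 * (k : ℝ) - 1) * d * μB := by
    nlinarith [mul_nonneg hk0 hb]
  refine ⟨?_, fun h => mul_pos hpos h⟩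
  obtain ⟨c, hc⟩ := hPSv1
  set y : Fin L → Fin d → ℝ := fun l => if l ∈ S then -c l else xt l with hy
  have hr : (fun i => v i - PSv i) = fun i => ∑ l' ∈ I1, ∑ j, A i (l', j) * y l' j := by
    ext i
    rw [hc i, hv, ← Finset.sum_sdiff hS, sub_eq_add_neg, ← Finset.sum_neg_distrib]
    congr 1
    · refine Finset.sum_congr rfl fun l hl => ?_
      simp [hy, (Finset.mem_sdiff.1 hl).2]
    · refine Finset.sum_congr rfl fun l hl => ?_
      simp [hy, hl]
  have hkey : ∀ l ∈ I1, (1 - ((d : ℝ) - 1) * ν + d * μB) * e2norm (y l) ≤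
      e2norm (blkT A l (fun i => v i - PSv i)) + d * μB * ∑ l' ∈ I1, e2norm (y l') := by
    intro l hl
    rw [hr, hν, hμB]
    exact key_ineq hd A hA I1 y l hl
  have hcardD : (I1 \ S).card = K - k := by
    rw [Finset.card_sdiff_of_subset hS, hcard, hSk]
  have hne : (I1 \ S).Nonempty := by
    rw [← Finset.card_pos, hcardD]; omega
  obtain ⟨l0, hl0, hmax⟩ := Finset.exists_max_image (I1 \ S) (fun l => e2norm (y l)) hne
  have hl0' := Finset.mem_sdiff.1 hl0
  set M := e2norm (y l0) with hM
  set T := ∑ l ∈ S, e2norm (y l) with hT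
  have hM0 : 0 ≤ M := e2norm_nonneg' _
  have hsumD : ∑ l ∈ I1 \ S, e2norm (y l) ≤ ((K : ℝ) - k) * M := by
    have := Finset.sum_le_card_nsmul (I1 \ S) (fun l => e2norm (y l)) M hmax
    rw [hcardD, nsmul_eq_mul, Nat.cast_sub hk.le] at this
    exact this
  have hsum : ∑ l' ∈ I1, e2norm (y l') ≤ ((K : ℝ) - k) * M + T := by
    rw [← Finset.sum_sdiff hS]; linarith
  have hsum' := mul_le_mul_of_nonneg_left hsum hb
  have hSl : ∀ l ∈ S, (1 - ((d : ℝ) - 1) * ν + d * μB) * e2norm (y l) ≤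
      d * μB * (((K : ℝ) - k) * M + T) := by
    intro l hl
    have h := hkey l (hS hl)
    have h0 : blkT A l (fun i => v i - PSv i) = 0 := by
      ext j; exact hPSv2 l hl j
    rw [h0, e2norm_zero'] at h
    linarith
  have hTs : (1 - ((d : ℝ) - 1) * ν + d * μB) * T ≤ k * (d * μB * (((K : ℝ) - k) * M + T)) := by
    have := Finset.sum_le_card_nsmul S _ _ hSl
    rw [hSk, nsmul_eq_mul, ← Finset.mul_sum] at this
    exact this
  have hTle : T ≤ ((K : ℝ) - k) * M := by
    have hKb : 0 ≤ ((K : ℝ) - k - 1) * (d * μB) := mul_nonneg (by linarith) hb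
    have hkb : 0 ≤ (k : ℝ) * (d * μB) := mul_nonneg hk0 hb
    have hst : 0 < 1 - ((d : ℝ) - 1) * ν + d * μB - k * (d * μB) := by nlinarith
    have hst2 : k * (d * μB) ≤ 1 - ((d : ℝ) - 1) * ν + d * μB - k * (d * μB) := by nlinarith
    have hKM : 0 ≤ ((K : ℝ) - k) * M := mul_nonneg (by linarith) hM0
    have := mul_le_mul_of_nonneg_right hst2 hKM
    refine le_of_mul_le_mul_left ?_ hst
    linarith
  have hmin : (⨅ l : {l : Fin L // l ∈ I1}, e2norm (xt l.1)) ≤ M := by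
    have : M = e2norm (xt l0) := by simp [hM, hy, hl0'.2]
    rw [this]
    exact ciInf_le (f := fun l : {l : Fin L // l ∈ I1} => e2norm (xt l.1))
      (Set.finite_range _).bddBelow ⟨l0, hl0'.1⟩
  have hsup : e2norm (blkT A l0 (fun i => v i - PSv i)) ≤
      (⨆ l : {l : Fin L // l ∈ I1}, e2norm (blkT A l.1 (fun i => v i - PSv i))) :=
    le_ciSup (f := fun l : {l : Fin L // l ∈ I1} => e2norm (blkT A l.1 (fun i => v i - PSv i)))
      (Set.finite_range _).bddAbove ⟨l0, hl0'.1⟩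
  refine (mul_le_mul_of_nonneg_left hmin hpos.le).trans (le_trans ?_ hsup)
  have h := hkey l0 hl0'.1
  have h2 := mul_le_mul_of_nonneg_left hTle hb
  linarith
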